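/- arXiv:1312.3735 — 2 statements merged into one kernel-verified Lean document; each statement's English description precedes it below -/
import Mathlib

section
/- Let 𝒳 be a finite nonempty set, let ρ > 0, and let (Pₙ)_{n≥1} be a sequence where Pₙ is a probability mass function on 𝒳ⁿ (the law of the first n symbols X₁,…,Xₙ of a source with alphabet 𝒳). If R < liminf_{n→∞} H_{1/(1+ρ)}(Pₙ)/n, then for every choice of functions fₙ : 𝒳ⁿ → {1,…,⌊2^{nR}⌋}, lim_{n→∞} Σ_{xⁿ∈𝒳ⁿ} Pₙ(xⁿ)·|fₙ⁻¹(fₙ(xⁿ))|^ρ = ∞. -/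
/-!
Write `L x` for the number of tasks performed along with `x`, i.e. the size of the fiber of the
encoder `f` through `x`. Each nonempty fiber contributes exactly `1` to `∑ x, 1 / L x`, so this sum
is at most the number of messages. Splitting `P x ^ (1 / (1 + ρ))` as `(1 / L x)` times
`L x * P x ^ (1 / (1 + ρ))`, Hölder's inequality with weights `1 / L x` then gives the single-shot
bound `2 ^ (ρ H) ≤ |Z| ^ ρ * E[L ^ ρ]` for an encoder with values in `Z`. At rate `R` and entropy
at least `c n` with `c > R`, it forces `E[L ^ ρ] ≥ 2 ^ (ρ (c - R) n)`.
-/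

open Filter Real

/-- The Rényi entropy of order `1/(1+ρ)` (base-2 logarithm) of a PMF `P`. -/
noncomputable def renyiEnt {Y : Type*} [Fintype Y] (ρ : ℝ) (P : Y → ℝ) : ℝ :=
  ((1 + ρ) / ρ) * Real.logb 2 (∑ y, P y ^ ((1 : ℝ) / (1 + ρ)))

open scoped Finset

/-- The `ρ`-th moment of the number of tasks performed when a task drawn from `P` is described by
the message `f x`, so that every task in the fiber of `f` through `x` has to be performed. -/
noncomputable def performedTasksMoment {Y Z : Type*} [Fintype Y] [DecidableEq Z]
    (ρ : ℝ) (P : Y → ℝ) (f : Y → Z) : ℝ :=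
  ∑ x, P x * (#{y | f y = f x} : ℝ) ^ ρ

theorem sum_rpow_rpow_le_sum_inv_rpow_mul_sum {ι : Type*} (s : Finset ι) {ρ : ℝ} (hρ : 0 ≤ ρ)
    {P L : ι → ℝ} (hP : ∀ i, 0 ≤ P i) (hL : ∀ i, 0 < L i) :
    (∑ i ∈ s, P i ^ (1 / (1 + ρ))) ^ (1 + ρ) ≤
      (∑ i ∈ s, (L i)⁻¹) ^ ρ * ∑ i ∈ s, P i * L i ^ ρ := by
  have hρ' : 0 < 1 + ρ := by positivity
  have split_term (i : ι) : (L i)⁻¹ * (L i * P i ^ (1 / (1 + ρ))) = P i ^ (1 / (1 + ρ)) :=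
    inv_mul_cancel_left₀ (hL i).ne' _
  have weighted_power (i : ι) :
      (L i)⁻¹ * (L i * P i ^ (1 / (1 + ρ))) ^ (1 + ρ) = P i * L i ^ ρ := by
    rw [mul_rpow (hL i).le (rpow_nonneg (hP i) _), one_div, rpow_inv_rpow (hP i) hρ'.ne',
      rpow_one_add' (hL i).le hρ'.ne']
    field_simp [(hL i).ne']
  have holder := inner_le_weight_mul_Lp_of_nonneg s (p := 1 + ρ) (by linarith)
    (fun i ↦ (L i)⁻¹) (fun i ↦ L i * P i ^ (1 / (1 + ρ)))
    (fun i ↦ (inv_pos.2 (hL i)).le) (fun i ↦ mul_nonneg (hL i).le (rpow_nonneg (hP i) _))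
  simp only [split_term, weighted_power] at holder
  have sum_inv_nonneg : 0 ≤ ∑ i ∈ s, (L i)⁻¹ :=
    Finset.sum_nonneg fun i _ ↦ (inv_pos.2 (hL i)).le
  have moment_nonneg : 0 ≤ ∑ i ∈ s, P i * L i ^ ρ :=
    Finset.sum_nonneg fun i _ ↦ mul_nonneg (hP i) (rpow_nonneg (hL i).le _)
  calc (∑ i ∈ s, P i ^ (1 / (1 + ρ))) ^ (1 + ρ)
      ≤ ((∑ i ∈ s, (L i)⁻¹) ^ (1 - (1 + ρ)⁻¹) *
          (∑ i ∈ s, P i * L i ^ ρ) ^ (1 + ρ)⁻¹) ^ (1 + ρ) :=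
        rpow_le_rpow (Finset.sum_nonneg fun i _ ↦ rpow_nonneg (hP i) _) holder hρ'.le
    _ = (∑ i ∈ s, (L i)⁻¹) ^ ρ * ∑ i ∈ s, P i * L i ^ ρ := by
        rw [mul_rpow (by positivity) (by positivity), ← rpow_mul sum_inv_nonneg,
          rpow_inv_rpow moment_nonneg hρ'.ne', sub_mul, inv_mul_cancel₀ hρ'.ne', one_mul,
          add_sub_cancel_left]

section Fibers

variable {Y Z : Type*} [Fintype Y] [DecidableEq Z]

theorem card_fiber_pos (f : Y → Z) (x : Y) : 0 < #{y | f y = f x} :=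
  Finset.card_pos.2 ⟨x, by simp⟩

theorem performedTasksMoment_nonneg {ρ : ℝ} {P : Y → ℝ} (hP : ∀ y, 0 ≤ P y) (f : Y → Z) :
    0 ≤ performedTasksMoment ρ P f :=
  Finset.sum_nonneg fun x _ ↦ mul_nonneg (hP x) (by positivity)

theorem sum_inv_card_fiber_le_card [Fintype Z] (f : Y → Z) :
    ∑ x, (#{y | f y = f x} : ℝ)⁻¹ ≤ Fintype.card Z := by
  have sum_fiber_le_one (z : Z) : ∑ x with f x = z, (#{y | f y = f x} : ℝ)⁻¹ ≤ 1 := by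
    calc ∑ x with f x = z, (#{y | f y = f x} : ℝ)⁻¹
        = ∑ x with f x = z, (#{y | f y = z} : ℝ)⁻¹ :=
          Finset.sum_congr rfl fun x hx ↦ by rw [(Finset.mem_filter.1 hx).2]
      _ = #{y | f y = z} * (#{y | f y = z} : ℝ)⁻¹ := by rw [Finset.sum_const, nsmul_eq_mul]
      _ ≤ 1 := mul_inv_le_one
  calc ∑ x, (#{y | f y = f x} : ℝ)⁻¹
      = ∑ z, ∑ x with f x = z, (#{y | f y = f x} : ℝ)⁻¹ := (Finset.sum_fiberwise _ f _).symm
    _ ≤ ∑ _z : Z, 1 := Finset.sum_le_sum fun z _ ↦ sum_fiber_le_one z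
    _ = Fintype.card Z := by simp

end Fibers

section Entropy

variable {Y : Type*} [Fintype Y] {ρ : ℝ} {P : Y → ℝ}

theorem one_le_sum_rpow_of_mem_stdSimplex {t : ℝ} (ht : t ≤ 1) (hP : P ∈ stdSimplex ℝ Y) :
    1 ≤ ∑ y, P y ^ t := by
  rw [← hP.2]
  gcongr with y
  exact self_le_rpow_of_le_one (hP.1 y) (mem_Icc_of_mem_stdSimplex hP y).2 ht

theorem one_le_sum_rpow_one_div (hρ : 0 ≤ ρ) (hP : P ∈ stdSimplex ℝ Y) :
    1 ≤ ∑ y, P y ^ (1 / (1 + ρ)) :=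
  one_le_sum_rpow_of_mem_stdSimplex (div_le_one_of_le₀ (by linarith) (by linarith)) hP

theorem renyiEnt_nonneg (hρ : 0 ≤ ρ) (hP : P ∈ stdSimplex ℝ Y) : 0 ≤ renyiEnt ρ P :=
  mul_nonneg (by positivity) (logb_nonneg one_lt_two (one_le_sum_rpow_one_div hρ hP))

theorem two_rpow_mul_renyiEnt (hρ : ρ ≠ 0) (hP : 0 < ∑ y, P y ^ (1 / (1 + ρ))) :
    (2 : ℝ) ^ (ρ * renyiEnt ρ P) = (∑ y, P y ^ (1 / (1 + ρ))) ^ (1 + ρ) := by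
  rw [renyiEnt, ← mul_assoc, mul_div_cancel₀ _ hρ, mul_comm, rpow_mul two_pos.le,
    rpow_logb two_pos one_lt_two.ne' hP]

theorem two_rpow_mul_renyiEnt_le {Z : Type*} [Fintype Z] [DecidableEq Z]
    (hρ : 0 < ρ) (hP : P ∈ stdSimplex ℝ Y) (f : Y → Z) :
    (2 : ℝ) ^ (ρ * renyiEnt ρ P) ≤ (Fintype.card Z : ℝ) ^ ρ * performedTasksMoment ρ P f := by
  have moment_nonneg := performedTasksMoment_nonneg (ρ := ρ) hP.1 f
  calc (2 : ℝ) ^ (ρ * renyiEnt ρ P)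
      = (∑ y, P y ^ (1 / (1 + ρ))) ^ (1 + ρ) :=
        two_rpow_mul_renyiEnt hρ.ne' (one_pos.trans_le (one_le_sum_rpow_one_div hρ.le hP))
    _ ≤ (∑ x, (#{y | f y = f x} : ℝ)⁻¹) ^ ρ * performedTasksMoment ρ P f :=
        sum_rpow_rpow_le_sum_inv_rpow_mul_sum _ hρ.le hP.1 fun x ↦ mod_cast card_fiber_pos f x
    _ ≤ (Fintype.card Z : ℝ) ^ ρ * performedTasksMoment ρ P f := by
        gcongr
        exact sum_inv_card_fiber_le_card f

theorem two_rpow_le_performedTasksMoment {Z : Type*} [Fintype Z] [DecidableEq Z]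
    (hρ : 0 < ρ) (hP : P ∈ stdSimplex ℝ Y) (f : Y → Z) {r : ℝ}
    (hr : (Fintype.card Z : ℝ) ≤ 2 ^ r) :
    (2 : ℝ) ^ (ρ * (renyiEnt ρ P - r)) ≤ performedTasksMoment ρ P f := by
  have moment_nonneg := performedTasksMoment_nonneg (ρ := ρ) hP.1 f
  rw [mul_sub, rpow_sub two_pos, div_le_iff₀' (by positivity)]
  calc (2 : ℝ) ^ (ρ * renyiEnt ρ P)
      ≤ (Fintype.card Z : ℝ) ^ ρ * performedTasksMoment ρ P f := two_rpow_mul_renyiEnt_le hρ hP f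
    _ ≤ ((2 : ℝ) ^ r) ^ ρ * performedTasksMoment ρ P f := by gcongr
    _ = 2 ^ (ρ * r) * performedTasksMoment ρ P f := by rw [← rpow_mul two_pos.le, mul_comm r]

end Entropy

theorem exists_gt_eventually_mul_le_renyiEnt {Y : ℕ → Type*} [∀ n, Fintype (Y n)] {ρ : ℝ}
    (hρ : 0 ≤ ρ) {P : (n : ℕ) → Y n → ℝ} (hP : ∀ n, P n ∈ stdSimplex ℝ (Y n)) {R : ℝ}
    (hR : R < liminf (fun n : ℕ ↦ renyiEnt ρ (P n) / (n : ℝ)) atTop) :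
    ∃ c > R, ∀ᶠ n : ℕ in atTop, c * n ≤ renyiEnt ρ (P n) := by
  have bddBelow : IsBoundedUnder (· ≥ ·) atTop fun n : ℕ ↦ renyiEnt ρ (P n) / (n : ℝ) :=
    isBoundedUnder_of ⟨0, fun n ↦ div_nonneg (renyiEnt_nonneg hρ (hP n)) n.cast_nonneg⟩
  obtain ⟨c, hRc, hc⟩ := exists_between hR
  refine ⟨c, hRc, ?_⟩
  filter_upwards [eventually_lt_of_lt_liminf hc bddBelow, eventually_gt_atTop 0] with n hn n_pos
  exact ((lt_div_iff₀ (Nat.cast_pos.2 n_pos)).1 hn).le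

theorem tasks_rate_converse_general {Y Z : ℕ → Type*} [∀ n, Fintype (Y n)] [∀ n, Fintype (Z n)]
    [∀ n, DecidableEq (Z n)] {ρ : ℝ} (hρ : 0 < ρ) {P : (n : ℕ) → Y n → ℝ}
    (hP : ∀ n, P n ∈ stdSimplex ℝ (Y n)) {R c : ℝ} (hRc : R < c)
    (hc : ∀ᶠ n : ℕ in atTop, c * n ≤ renyiEnt ρ (P n)) (f : (n : ℕ) → Y n → Z n)
    (hZ : ∀ᶠ n : ℕ in atTop, (Fintype.card (Z n) : ℝ) ≤ 2 ^ (n * R)) :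
    Tendsto (fun n ↦ performedTasksMoment ρ (P n) (f n)) atTop atTop := by
  have growth : Tendsto (fun n : ℕ ↦ (2 : ℝ) ^ (ρ * (c - R) * n)) atTop atTop :=
    (tendsto_rpow_atTop_of_base_gt_one 2 one_lt_two).comp
      (tendsto_natCast_atTop_atTop.const_mul_atTop (mul_pos hρ (sub_pos.2 hRc)))
  refine tendsto_atTop_mono' _ ?_ growth
  filter_upwards [hc, hZ] with n hcn hZn
  calc (2 : ℝ) ^ (ρ * (c - R) * n)
      = 2 ^ (ρ * (c * n - n * R)) := by ring_nf
    _ ≤ 2 ^ (ρ * (renyiEnt ρ (P n) - n * R)) := by gcongr; exact one_le_two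
    _ ≤ performedTasksMoment ρ (P n) (f n) := two_rpow_le_performedTasksMoment hρ (hP n) (f n) hZn

/-- if `R` is below the liminf of the Rényi entropy rate of order `1/(1+ρ)`,
then for every choice of encoders of rate `R` the ρ-th moment of the ratio of performed
tasks tends to infinity. -/
theorem tasks_rate_converse {X : Type*} [Fintype X] [Nonempty X]
    (ρ : ℝ) (hρ : 0 < ρ)
    (P : (n : ℕ) → (Fin n → X) → ℝ)
    (hP0 : ∀ n xs, 0 ≤ P n xs) (hP1 : ∀ n, ∑ xs, P n xs = 1)
    (R : ℝ)
    (hR : R < Filter.liminf (fun n : ℕ => renyiEnt ρ (P n) / (n : ℝ)) Filter.atTop)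
    (f : (n : ℕ) → (Fin n → X) → Fin ⌊(2 : ℝ) ^ ((n : ℝ) * R)⌋₊) :
    Filter.Tendsto
      (fun n : ℕ => ∑ xs, P n xs *
        ((Finset.univ.filter fun ys => f n ys = f n xs).card : ℝ) ^ ρ)
      Filter.atTop Filter.atTop := by
  have hP (n : ℕ) : P n ∈ stdSimplex ℝ (Fin n → X) := ⟨hP0 n, hP1 n⟩
  obtain ⟨c, hRc, hc⟩ := exists_gt_eventually_mul_le_renyiEnt hρ.le hP hR
  exact tasks_rate_converse_general hρ hP hRc hc f <| .of_forall fun n ↦ by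
    simpa using Nat.floor_le (by positivity)
end

section
/- Let P and Q be probability mass functions on a finite set 𝒳 with supp(P) ⊆ supp(Q). Then lim_{α→0⁺} Δ_α(P‖Q) = log₂( |supp(Q)| / |supp(P)| ). -/
open scoped ENNReal
open Filter

/-- Sundaresan's divergence `Δ_α(P‖Q)` (base-2 logarithm), valued in `EReal` so as to
accommodate the conventions `0/0 = 0` and `a/0 = +∞` for `a > 0`. -/
noncomputable def sundaresan {Y : Type*} [Fintype Y] (α : ℝ) (P Q : Y → ℝ) : EReal :=
  let Z : ℝ≥0∞ :=
    ENNReal.ofReal (∑ y, Q y ^ α) *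
      (∑ y, ENNReal.ofReal (P y) / ENNReal.ofReal (Q y) ^ (1 - α)) ^ (α / (1 - α)) /
      ENNReal.ofReal (∑ y, P y ^ α) ^ ((1 : ℝ) / (1 - α))
  if Z = ⊤ then ⊤ else ((Real.logb 2 Z.toReal : ℝ) : EReal)

/-!
As `α → 0⁺`, each power `Q x ^ α` tends to `1` on the support of `Q` and vanishes off it, so
`∑ Q ^ α → |supp Q|`; likewise `(∑ P ^ α) ^ (1 / (1 - α)) → |supp P|`. The inclusion of supports
makes `∑ P / Q ^ (1 - α)` tend to a finite positive limit, so its power with exponent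
`α / (1 - α) → 0` tends to `1` and only the two cardinalities survive.
-/

section Powers

open scoped Topology

variable {ι : Type*} {s : Finset ι} {f g : ι → ℝ} {a b : ℝ}

-- The limit is two-sided because `Real.rpow` has `0 ^ r = 0` for `r < 0` as well.
theorem tendsto_const_rpow_nhdsNE_zero (ha : 0 ≤ a) :
    Tendsto (fun r : ℝ => a ^ r) (𝓝[≠] 0) (𝓝 (if 0 < a then 1 else 0)) := by
  rcases ha.eq_or_lt with rfl | ha
  · rw [if_neg (lt_irrefl 0)]
    refine tendsto_const_nhds.congr' ?_
    filter_upwards [self_mem_nhdsWithin] with r hr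
    exact (Real.zero_rpow hr).symm
  · rw [if_pos ha, ← Real.rpow_zero a]
    exact (Real.continuousAt_const_rpow ha.ne').tendsto.mono_left nhdsWithin_le_nhds

theorem tendsto_sum_rpow_nhdsNE_zero (hf : ∀ i ∈ s, 0 ≤ f i) :
    Tendsto (fun r : ℝ => ∑ i ∈ s, f i ^ r) (𝓝[≠] 0)
      (𝓝 ((s.filter fun i => 0 < f i).card : ℝ)) := by
  rw [← Finset.sum_boole]
  exact tendsto_finsetSum s fun i hi => tendsto_const_rpow_nhdsNE_zero (hf i hi)

theorem sum_rpow_pos (hf : ∀ i ∈ s, 0 ≤ f i) (hpos : ∃ i ∈ s, 0 < f i) (r : ℝ) :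
    0 < ∑ i ∈ s, f i ^ r :=
  Finset.sum_pos' (fun i hi => Real.rpow_nonneg (hf i hi) r)
    (hpos.imp fun _ ⟨hi, hfi⟩ => ⟨hi, Real.rpow_pos_of_pos hfi r⟩)

theorem continuous_const_div_rpow (hab : a ≠ 0 → 0 < b) :
    Continuous fun r : ℝ => a / b ^ r := by
  rcases eq_or_ne a 0 with rfl | ha
  · simpa only [zero_div] using continuous_const
  · have hb := hab ha
    exact continuous_const.div (Real.continuous_const_rpow hb.ne')
      fun r => (Real.rpow_pos_of_pos hb r).ne'

theorem div_rpow_nonneg (ha : 0 ≤ a) (hab : 0 < a → 0 < b) (r : ℝ) : 0 ≤ a / b ^ r := by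
  rcases ha.eq_or_lt with rfl | ha
  · rw [zero_div]
  · exact (div_pos ha (Real.rpow_pos_of_pos (hab ha) r)).le

theorem ofReal_div_ofReal_rpow (ha : 0 ≤ a) (hab : 0 < a → 0 < b) (r : ℝ) :
    ENNReal.ofReal a / ENNReal.ofReal b ^ r = ENNReal.ofReal (a / b ^ r) := by
  rcases ha.eq_or_lt with rfl | ha
  · simp
  · have hb := hab ha
    rw [ENNReal.ofReal_rpow_of_pos hb, ENNReal.ofReal_div_of_pos (Real.rpow_pos_of_pos hb r)]

theorem sum_ofReal_div_ofReal_rpow (hf : ∀ i ∈ s, 0 ≤ f i) (hfg : ∀ i ∈ s, 0 < f i → 0 < g i)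
    (r : ℝ) :
    ∑ i ∈ s, ENNReal.ofReal (f i) / ENNReal.ofReal (g i) ^ r =
      ENNReal.ofReal (∑ i ∈ s, f i / g i ^ r) := by
  rw [ENNReal.ofReal_sum_of_nonneg fun i hi => div_rpow_nonneg (hf i hi) (hfg i hi) r]
  exact Finset.sum_congr rfl fun i hi => ofReal_div_ofReal_rpow (hf i hi) (hfg i hi) r

theorem sum_div_rpow_pos (hf : ∀ i ∈ s, 0 ≤ f i) (hpos : ∃ i ∈ s, 0 < f i)
    (hfg : ∀ i ∈ s, 0 < f i → 0 < g i) (r : ℝ) : 0 < ∑ i ∈ s, f i / g i ^ r :=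
  Finset.sum_pos' (fun i hi => div_rpow_nonneg (hf i hi) (hfg i hi) r)
    (hpos.imp fun i ⟨hi, hfi⟩ => ⟨hi, div_pos hfi (Real.rpow_pos_of_pos (hfg i hi hfi) r)⟩)

theorem tendsto_sum_div_rpow_rpow_zero (hf : ∀ i ∈ s, 0 ≤ f i) (hpos : ∃ i ∈ s, 0 < f i)
    (hfg : ∀ i ∈ s, 0 < f i → 0 < g i) :
    Tendsto (fun r : ℝ => (∑ i ∈ s, f i / g i ^ (1 - r)) ^ (r / (1 - r))) (𝓝 0) (𝓝 1) := by
  have hbase : Continuous fun r : ℝ => ∑ i ∈ s, f i / g i ^ (1 - r) :=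
    continuous_finsetSum s fun i hi =>
      (continuous_const_div_rpow fun hfi => hfg i hi ((hf i hi).lt_of_ne' hfi)).comp
        (continuous_sub_left 1)
  have hbase_pos : 0 < ∑ i ∈ s, f i / g i ^ (1 - (0 : ℝ)) := sum_div_rpow_pos hf hpos hfg _
  have hexp : ContinuousAt (fun r : ℝ => r / (1 - r)) 0 :=
    continuousAt_id.div (by fun_prop) (by norm_num)
  simpa using (hbase.continuousAt.rpow hexp (Or.inl hbase_pos.ne')).tendsto

end Powers

section Divergence

open scoped Topology

variable {X : Type*} [Fintype X] {P Q : X → ℝ}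

/-- The argument of the logarithm in `Δ_α(P‖Q)`, computed in `ℝ`. Real division sends `a / 0` to
`0` instead of `+∞`, so this is the intended quantity only when `supp P ⊆ supp Q`. -/
noncomputable def sundaresanRatio (α : ℝ) (P Q : X → ℝ) : ℝ :=
  (∑ x, Q x ^ α) * (∑ x, P x / Q x ^ (1 - α)) ^ (α / (1 - α)) / (∑ x, P x ^ α) ^ (1 / (1 - α))

theorem sundaresan_eq_logb_sundaresanRatio (hP0 : ∀ x, 0 ≤ P x) (hP : ∃ x, 0 < P x)
    (hQ0 : ∀ x, 0 ≤ Q x) (hsupp : {x | 0 < P x} ⊆ {x | 0 < Q x}) (α : ℝ) :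
    sundaresan α P Q = (Real.logb 2 (sundaresanRatio α P Q) : ℝ) := by
  have hP' : ∃ x ∈ Finset.univ, 0 < P x := by simpa using hP
  have hQα : 0 ≤ ∑ x, Q x ^ α := Finset.sum_nonneg fun x _ => Real.rpow_nonneg (hQ0 x) α
  have hPα : 0 < ∑ x, P x ^ α := sum_rpow_pos (fun x _ => hP0 x) hP' α
  have hPQ : 0 < ∑ x, P x / Q x ^ (1 - α) :=
    sum_div_rpow_pos (fun x _ => hP0 x) hP' (fun _ _ hx => hsupp hx) (1 - α)
  have hratio : 0 ≤ sundaresanRatio α P Q := by unfold sundaresanRatio; positivity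
  have hofReal :
      ENNReal.ofReal (∑ x, Q x ^ α) *
        (∑ x, ENNReal.ofReal (P x) / ENNReal.ofReal (Q x) ^ (1 - α)) ^ (α / (1 - α)) /
        ENNReal.ofReal (∑ x, P x ^ α) ^ (1 / (1 - α)) =
      ENNReal.ofReal (sundaresanRatio α P Q) := by
    rw [sum_ofReal_div_ofReal_rpow (fun x _ => hP0 x) (fun _ _ hx => hsupp hx),
      ENNReal.ofReal_rpow_of_pos hPQ, ENNReal.ofReal_rpow_of_pos hPα,
      ← ENNReal.ofReal_mul hQα, ← ENNReal.ofReal_div_of_pos (Real.rpow_pos_of_pos hPα _),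
      sundaresanRatio]
  simp only [sundaresan, hofReal, ENNReal.ofReal_ne_top, if_false, ENNReal.toReal_ofReal hratio]

theorem tendsto_sundaresanRatio_nhdsNE_zero (hP0 : ∀ x, 0 ≤ P x) (hP : ∃ x, 0 < P x)
    (hQ0 : ∀ x, 0 ≤ Q x) (hsupp : {x | 0 < P x} ⊆ {x | 0 < Q x}) :
    Tendsto (fun α : ℝ => sundaresanRatio α P Q) (𝓝[≠] 0)
      (𝓝 (((Finset.univ.filter fun x => 0 < Q x).card : ℝ) /
        ((Finset.univ.filter fun x => 0 < P x).card : ℝ))) := by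
  have hcard : ((Finset.univ.filter fun x => 0 < P x).card : ℝ) ≠ 0 := by
    simpa [Finset.filter_eq_empty_iff] using hP
  have hexp : Tendsto (fun α : ℝ => 1 / (1 - α)) (𝓝[≠] 0) (𝓝 1) := by
    have hcont : ContinuousAt (fun α : ℝ => 1 / (1 - α)) 0 :=
      continuousAt_const.div (by fun_prop) (by norm_num)
    simpa using hcont.tendsto.mono_left nhdsWithin_le_nhds
  have hPQ : Tendsto (fun α : ℝ => (∑ x, P x / Q x ^ (1 - α)) ^ (α / (1 - α))) (𝓝[≠] 0) (𝓝 1) :=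
    (tendsto_sum_div_rpow_rpow_zero (fun x _ => hP0 x) (by simpa using hP)
      fun _ _ hx => hsupp hx).mono_left nhdsWithin_le_nhds
  have hnum : Tendsto (fun α : ℝ => (∑ x, Q x ^ α) * (∑ x, P x / Q x ^ (1 - α)) ^ (α / (1 - α)))
      (𝓝[≠] 0) (𝓝 ((Finset.univ.filter fun x => 0 < Q x).card : ℝ)) := by
    simpa only [mul_one] using (tendsto_sum_rpow_nhdsNE_zero fun x _ => hQ0 x).mul hPQ
  have hden : Tendsto (fun α : ℝ => (∑ x, P x ^ α) ^ (1 / (1 - α)))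
      (𝓝[≠] 0) (𝓝 ((Finset.univ.filter fun x => 0 < P x).card : ℝ)) := by
    simpa only [Real.rpow_one] using
      (tendsto_sum_rpow_nhdsNE_zero fun x _ => hP0 x).rpow hexp (Or.inl hcard)
  exact hnum.div hden hcard

theorem sundaresan_tendsto_zero_general (hP0 : ∀ x, 0 ≤ P x) (hP : ∃ x, 0 < P x)
    (hQ0 : ∀ x, 0 ≤ Q x) (hsupp : {x | 0 < P x} ⊆ {x | 0 < Q x}) :
    Tendsto (fun α : ℝ => sundaresan α P Q) (𝓝[>] 0)
      (𝓝 (Real.logb 2 (((Finset.univ.filter fun x => 0 < Q x).card : ℝ) /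
        ((Finset.univ.filter fun x => 0 < P x).card : ℝ)) : ℝ)) := by
  simp_rw [sundaresan_eq_logb_sundaresanRatio hP0 hP hQ0 hsupp]
  have hlimit_ne_zero : ((Finset.univ.filter fun x => 0 < Q x).card : ℝ) /
      ((Finset.univ.filter fun x => 0 < P x).card : ℝ) ≠ 0 := by
    have hQ : ∃ x, 0 < Q x := hP.imp fun _ hx => hsupp hx
    simpa [Finset.filter_eq_empty_iff] using And.intro hQ hP
  have hratio := (tendsto_sundaresanRatio_nhdsNE_zero hP0 hP hQ0 hsupp).mono_left
    (nhdsGT_le_nhdsNE 0)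
  exact (continuous_coe_real_ereal.tendsto _).comp (hratio.logb hlimit_ne_zero)

end Divergence

/-- as `α → 0⁺`, `Δ_α(P‖Q)` tends to `log₂(|supp Q| / |supp P|)` when
`supp(P) ⊆ supp(Q)`. -/
theorem sundaresan_tendsto_zero {X : Type*} [Fintype X]
    (P Q : X → ℝ) (hP0 : ∀ x, 0 ≤ P x) (hP1 : ∑ x, P x = 1)
    (hQ0 : ∀ x, 0 ≤ Q x) (hQ1 : ∑ x, Q x = 1)
    (hsupp : {x : X | 0 < P x} ⊆ {x : X | 0 < Q x}) :
    Filter.Tendsto (fun α : ℝ => sundaresan α P Q) (nhdsWithin 0 (Set.Ioi 0))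
      (nhds ((Real.logb 2
        (((Finset.univ.filter fun x : X => 0 < Q x).card : ℝ) /
          ((Finset.univ.filter fun x : X => 0 < P x).card : ℝ)) : ℝ) : EReal)) := by
  have hP : 0 < ∑ x, P x := hP1 ▸ one_pos
  exact sundaresan_tendsto_zero_general hP0
    (by simpa using (Finset.sum_pos_iff_of_nonneg fun x _ => hP0 x).mp hP) hQ0 hsupp
end
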